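/- arXiv:2403.05865 — 2 statements merged into one kernel-verified Lean document; each statement's English description precedes it below -/
import Mathlib

section
/- Let a > 0 be a smooth ℤⁿ-periodic function, u : ℝⁿ → ℝ smooth with ℤⁿ-periodic gradient Du, W smooth ℤⁿ-periodic, and E ∈ ℝ, satisfying the eigenvalue equation (ħ²/2)Δa = a(|Du|²/2 + W − E) on ℝⁿ. Let a', u' : ℝⁿ → ℝ be smooth with a' ℤⁿ-periodic and Du' ℤⁿ-periodic, and define v' = u' − ħ·(a'/a) and (v*)' = u' + ħ·(a'/a). Then ∫ [ −ħ²|Da'|² + a²|Du'|² − 2(a')²(|Du|²/2 + W − E) ] dx = ∫ a² Dv' · D(v*)' dx. -/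
/-!
Write `q = a'/a`. Since `v' = u' - ħ q` and `(v*)' = u' + ħ q`, the right-hand integrand is
`a² |Du'|² - ħ² a² |Dq|²`. Expanding `Dq` by the quotient rule gives the pointwise identity
`a² |Dq|² = |Da'|² + (a'²/a) Δa - div ((a'²/a) Da)`, and the eigenvalue equation turns
`ħ² (a'²/a) Δa` into `2 a'² (|Du|²/2 + W - E)`. Hence the two integrands differ by
`ħ² div ((a'²/a) Da)`, the divergence of a smooth periodic field, whose integral over the unit
cube vanishes by the divergence theorem because opposite faces cancel
(`integral_sum_pd_eq_zero`).
-/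

open MeasureTheory

noncomputable section

/-- `ℝⁿ` with the Euclidean inner product. -/
abbrev En (n : ℕ) := EuclideanSpace ℝ (Fin n)

/-- The integer vector `k` viewed as a point of `ℝⁿ`. -/
def intVec {n : ℕ} (k : Fin n → ℤ) : En n :=
  (EuclideanSpace.equiv (Fin n) ℝ).symm (fun i => (k i : ℝ))

/-- `ℤⁿ`-periodicity for scalar functions on `ℝⁿ`. -/
def IsPeriodic {n : ℕ} (f : En n → ℝ) : Prop :=
  ∀ (x : En n) (k : Fin n → ℤ), f (x + intVec k) = f x

/-- `ℤⁿ`-periodicity for vector fields on `ℝⁿ`. -/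
def IsPeriodicV {n : ℕ} (F : En n → En n) : Prop :=
  ∀ (x : En n) (k : Fin n → ℤ), F (x + intVec k) = F x

/-- The unit cube `[0,1]ⁿ`, the fundamental domain of the torus. -/
def unitCube (n : ℕ) : Set (En n) := {x | ∀ i, x i ∈ Set.Icc (0:ℝ) 1}

/-- Euclidean dot product. -/
def dot {n : ℕ} (x y : En n) : ℝ := ∑ i, x i * y i

/-- Partial derivative in the `i`-th coordinate direction. -/
def pd {n : ℕ} (i : Fin n) (f : En n → ℝ) (x : En n) : ℝ :=
  fderiv ℝ f x (EuclideanSpace.single i 1)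

/-- The Laplacian of a scalar function. -/
def lap {n : ℕ} (f : En n → ℝ) (x : En n) : ℝ :=
  ∑ i, pd i (fun y => pd i f y) x

/-- The divergence of a vector field. -/
def dvg {n : ℕ} (F : En n → En n) (x : En n) : ℝ :=
  ∑ i, fderiv ℝ (fun y => F y i) x (EuclideanSpace.single i 1)

theorem gradient_apply_eq_pd {n : ℕ} (f : En n → ℝ) (x : En n) (i : Fin n) :
    gradient f x i = pd i f x := by
  have h := inner_gradient_left (𝕜 := ℝ) (f := f) (x := x)
    (y := (EuclideanSpace.single i 1 : En n))
  rw [pd, ← h, EuclideanSpace.inner_single_right]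
  simp

theorem dot_gradient {n : ℕ} (f g : En n → ℝ) (x : En n) :
    dot (gradient f x) (gradient g x) = ∑ i, pd i f x * pd i g x := by
  simp only [dot, gradient_apply_eq_pd]

theorem IsPeriodic.pd {n : ℕ} {f : En n → ℝ} (hf : IsPeriodic f) (i : Fin n) :
    IsPeriodic (pd i f) := by
  intro x k
  have h : (fun y => f (y + intVec k)) = f := funext fun y => hf y k
  rw [_root_.pd, _root_.pd, ← fderiv_comp_add_right, h]

theorem contDiff_pd {n : ℕ} {f : En n → ℝ} (hf : ContDiff ℝ (⊤ : ℕ∞) f) (i : Fin n) :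
    ContDiff ℝ (⊤ : ℕ∞) (pd i f) := by
  have h : ContDiff ℝ (⊤ : ℕ∞) (fderiv ℝ f) := hf.fderiv_right (by simp)
  exact h.clm_apply contDiff_const

theorem unitCube_eq_preimage (n : ℕ) :
    unitCube n = (EuclideanSpace.equiv (Fin n) ℝ) ⁻¹' Set.Icc 0 1 := by
  ext x
  simp only [unitCube, Set.mem_ofPred_eq, Set.mem_Icc, Set.mem_preimage, Pi.le_def]
  exact forall_and

theorem isCompact_unitCube (n : ℕ) : IsCompact (unitCube n) := by
  rw [unitCube_eq_preimage]
  exact (EuclideanSpace.equiv (Fin n) ℝ).toHomeomorph.isCompact_preimage.2 isCompact_Icc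

/-- The integral over the unit cube of the divergence of a `C¹` periodic vector field (given by its
components `F i`) is zero: the fluxes through opposite faces cancel. -/
theorem integral_sum_pd_eq_zero {n : ℕ} (F : Fin n → En n → ℝ)
    (hF : ∀ i, ContDiff ℝ 1 (F i)) (hper : ∀ i, IsPeriodic (F i)) :
    ∫ x in unitCube n, ∑ i, pd i (F i) x = 0 := by
  cases n with
  | zero => simp
  | succ m =>
    let eL := EuclideanSpace.equiv (Fin (m + 1)) ℝ
    have he_vol : MeasurePreserving eL volume volume := PiLp.volume_preserving_ofLp (Fin (m + 1))
    have he_emb : MeasurableEmbedding eL := eL.toHomeomorph.measurableEmbedding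
    have hcont : Continuous fun x => ∑ i, pd i (F i) x :=
      continuous_finsetSum _ fun i _ =>
        ((hF i).continuous_fderiv (by simp)).clm_apply continuous_const
    have hdiv := integral_divergence_of_hasFDerivAt_off_countable'
      (0 : Fin (m + 1) → ℝ) 1 zero_le_one (fun i x => F i (eL.symm x))
      (fun i x => (fderiv ℝ (F i) (eL.symm x)).comp
        (eL.symm : (Fin (m + 1) → ℝ) →L[ℝ] En (m + 1))) ∅ Set.countable_empty
      (fun i => ((hF i).continuous.comp eL.symm.continuous).continuousOn)
      (fun x _ i => (((hF i).differentiable (by simp)) _).hasFDerivAt.comp x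
        eL.symm.hasFDerivAt)
      (by
        have := (hcont.comp eL.symm.continuous).continuousOn.integrableOn_compact
          (μ := volume) (isCompact_Icc (a := (0 : Fin (m + 1) → ℝ)) (b := 1))
        exact this)
    have hL : ∫ x in unitCube (m + 1), ∑ i, pd i (F i) x
        = ∫ x in Set.Icc (0 : Fin (m + 1) → ℝ) 1, ∑ i, pd i (F i) (eL.symm x) := by
      rw [← he_vol.setIntegral_preimage_emb he_emb, unitCube_eq_preimage]
      simp only [eL, ContinuousLinearEquiv.symm_apply_apply]
    rw [hL]
    refine Eq.trans hdiv (Finset.sum_eq_zero fun i _ => ?_)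
    rw [sub_eq_zero]
    congr 1
    funext y
    -- The front face is the back face translated by the integer vector `eᵢ`.
    have hshift : eL.symm (i.insertNth ((1 : Fin (m + 1) → ℝ) i) y)
        = eL.symm (i.insertNth ((0 : Fin (m + 1) → ℝ) i) y) + intVec (Pi.single i 1) := by
      rw [intVec, ← map_add]
      congr 1
      funext j
      refine Fin.succAboveCases i ?_ (fun j => ?_) j
      · simp
      · simp
    show F i (eL.symm _) = F i (eL.symm _)
    rw [hshift, hper i]

theorem pd_sub_const_mul {n : ℕ} {f g : En n → ℝ} {x : En n} (hf : DifferentiableAt ℝ f x)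
    (hg : DifferentiableAt ℝ g x) (c : ℝ) (i : Fin n) :
    pd i (fun y => f y - c * g y) x = pd i f x - c * pd i g x := by
  have := (hf.hasFDerivAt.sub (hg.hasFDerivAt.const_mul c)).fderiv
  change fderiv ℝ (f - fun y => c * g y) x _ = _
  rw [this]
  simp [pd]

theorem pd_add_const_mul {n : ℕ} {f g : En n → ℝ} {x : En n} (hf : DifferentiableAt ℝ f x)
    (hg : DifferentiableAt ℝ g x) (c : ℝ) (i : Fin n) :
    pd i (fun y => f y + c * g y) x = pd i f x + c * pd i g x := by
  simpa using pd_sub_const_mul hf hg (-c) i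

theorem pd_mul {n : ℕ} {f g : En n → ℝ} {x : En n} (hf : DifferentiableAt ℝ f x)
    (hg : DifferentiableAt ℝ g x) (i : Fin n) :
    pd i (fun y => f y * g y) x = pd i f x * g x + f x * pd i g x := by
  simp only [pd]
  rw [fderiv_fun_mul hf hg]
  simp
  ring

theorem pd_div {n : ℕ} {f g : En n → ℝ} {x : En n} (hf : DifferentiableAt ℝ f x)
    (hg : DifferentiableAt ℝ g x) (hx : g x ≠ 0) (i : Fin n) :
    pd i (fun y => f y / g y) x = (pd i f x * g x - f x * pd i g x) / g x ^ 2 := by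
  have hq : DifferentiableAt ℝ (fun y => f y / g y) x := by
    simp only [div_eq_mul_inv]
    exact hf.fun_mul (hg.fun_inv hx)
  have h := pd_mul hq hg i
  have hEq : pd i (fun y => f y / g y * g y) x = pd i f x := by
    have : (fun y => f y / g y * g y) =ᶠ[nhds x] f := by
      filter_upwards [hg.continuousAt.eventually_ne hx] with y hy
      exact div_mul_cancel₀ _ hy
    simp only [pd, this.fderiv_eq]
  rw [hEq] at h
  rw [h]
  field_simp
  ring

/-- Theorem 1.1 = Theorem 4.1: second variation of the
Quantum Guerra-Morato action at a critical point. -/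
theorem secondVariation_eq_dot_integral {n : ℕ} (hbar : ℝ) (h_hbar : 0 < hbar)
    (a u W : En n → ℝ) (E : ℝ)
    (ha : ContDiff ℝ (⊤ : ℕ∞) a) (hu : ContDiff ℝ (⊤ : ℕ∞) u) (hW : ContDiff ℝ (⊤ : ℕ∞) W)
    (hapos : ∀ x, 0 < a x) (haper : IsPeriodic a)
    (hDuper : IsPeriodicV (fun x => gradient u x)) (hWper : IsPeriodic W)
    (heig : ∀ x, hbar ^ 2 / 2 * lap a x
      = a x * (dot (gradient u x) (gradient u x) / 2 + W x - E))
    (a' u' : En n → ℝ)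
    (ha' : ContDiff ℝ (⊤ : ℕ∞) a') (hu' : ContDiff ℝ (⊤ : ℕ∞) u')
    (ha'per : IsPeriodic a') (hDu'per : IsPeriodicV (fun x => gradient u' x)) :
    (∫ x in unitCube n,
        (-hbar ^ 2 * dot (gradient a' x) (gradient a' x)
          + (a x) ^ 2 * dot (gradient u' x) (gradient u' x)
          - 2 * (a' x) ^ 2 * (dot (gradient u x) (gradient u x) / 2 + W x - E)))
      = ∫ x in unitCube n,
          (a x) ^ 2 * dot (gradient (fun y => u' y - hbar * (a' y / a y)) x)
                          (gradient (fun y => u' y + hbar * (a' y / a y)) x) := by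
  have dA : Differentiable ℝ a := ha.differentiable (by simp)
  have dA' : Differentiable ℝ a' := ha'.differentiable (by simp)
  have dU' : Differentiable ℝ u' := hu'.differentiable (by simp)
  have hne : ∀ x, a x ≠ 0 := fun x => (hapos x).ne'
  have dQ : Differentiable ℝ (fun y => a' y / a y) :=
    (ha'.div ha hne).differentiable (by simp)
  -- The components of the field `(a'²/a) Da`.
  let F : Fin n → En n → ℝ := fun i y => a' y * (a' y / a y) * pd i a y
  have hF : ∀ i, ContDiff ℝ (⊤ : ℕ∞) (F i) := fun i =>
    (ha'.mul (ha'.div ha hne)).mul (contDiff_pd ha i)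
  have hFper : ∀ i, IsPeriodic (F i) := by
    intro i x k
    simp only [F, haper x k, ha'per x k, haper.pd i x k]
  have hF1 : ∀ i, ContDiff ℝ 1 (F i) := fun i => (hF i).of_le (by exact_mod_cast le_top)
  have hzero := integral_sum_pd_eq_zero F hF1 hFper
  have hpdF : ∀ i x, pd i (F i) x =
      (pd i a' x * (a' x / a x)
        + a' x * ((pd i a' x * a x - a' x * pd i a x) / a x ^ 2)) * pd i a x
      + a' x * (a' x / a x) * pd i (fun y => pd i a y) x := by
    intro i x
    have dP : Differentiable ℝ (pd i a) := (contDiff_pd ha i).differentiable (by simp)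
    simp only [F]
    rw [pd_mul ((dA'.fun_mul dQ) x) (dP x), pd_mul (dA' x) (dQ x), pd_div (dA' x) (dA x) (hne x)]
  have key : ∀ x, (a x) ^ 2 * dot (gradient (fun y => u' y - hbar * (a' y / a y)) x)
        (gradient (fun y => u' y + hbar * (a' y / a y)) x)
      = (-hbar ^ 2 * dot (gradient a' x) (gradient a' x)
          + (a x) ^ 2 * dot (gradient u' x) (gradient u' x)
          - 2 * (a' x) ^ 2 * (dot (gradient u x) (gradient u x) / 2 + W x - E))
        + hbar ^ 2 * ∑ i, pd i (F i) x := by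
    intro x
    have hV : dot (gradient u x) (gradient u x) / 2 + W x - E
        = hbar ^ 2 / 2 * lap a x / a x := by
      rw [heig x, mul_div_cancel_left₀ _ (hne x)]
    rw [hV, lap, dot_gradient, dot_gradient, dot_gradient]
    have hsum : 2 * (a' x) ^ 2 * (hbar ^ 2 / 2 * (∑ i, pd i (fun y => pd i a y) x) / a x)
        = ∑ i, hbar ^ 2 * (a' x) ^ 2 / a x * pd i (fun y => pd i a y) x := by
      rw [← Finset.mul_sum]
      ring
    rw [hsum]
    simp only [Finset.mul_sum]
    rw [← Finset.sum_add_distrib, ← Finset.sum_sub_distrib, ← Finset.sum_add_distrib]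
    refine Finset.sum_congr rfl fun i _ => ?_
    rw [pd_sub_const_mul (dU' x) (dQ x), pd_add_const_mul (dU' x) (dQ x),
      pd_div (dA' x) (dA x) (hne x), hpdF]
    have := hne x
    field_simp
    ring
  have cpd : ∀ {f : En n → ℝ}, ContDiff ℝ (⊤ : ℕ∞) f → ∀ i, Continuous (pd i f) :=
    fun hf i => (contDiff_pd hf i).continuous
  have hint1 : IntegrableOn (fun x => -hbar ^ 2 * dot (gradient a' x) (gradient a' x)
          + (a x) ^ 2 * dot (gradient u' x) (gradient u' x)
          - 2 * (a' x) ^ 2 * (dot (gradient u x) (gradient u x) / 2 + W x - E))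
      (unitCube n) := by
    refine ContinuousOn.integrableOn_compact (isCompact_unitCube n) (Continuous.continuousOn ?_)
    simp only [dot_gradient]
    have c1 := fun i => cpd ha' i
    have c2 := fun i => cpd hu' i
    have c3 := fun i => cpd hu i
    have c4 := ha.continuous
    have c5 := ha'.continuous
    have c6 := hW.continuous
    fun_prop
  have hint2 : IntegrableOn (fun x => hbar ^ 2 * ∑ i, pd i (F i) x) (unitCube n) := by
    refine ContinuousOn.integrableOn_compact (isCompact_unitCube n) (Continuous.continuousOn ?_)
    have c1 := fun i => cpd (hF i) i
    fun_prop
  simp only [key]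
  rw [integral_add hint1 hint2, integral_const_mul, hzero, mul_zero, add_zero]
end
end

section
/- Let ħ > 0, P ∈ ℝⁿ, W : ℝⁿ → ℝ smooth, H̄ ∈ ℝ, and let v, v* : ℝⁿ → ℝ be smooth functions satisfying −(ħ/2)Δv + (1/2)|P + Dv|² − W = H̄ and (ħ/2)Δv* + (1/2)|P + Dv*|² − W = H̄ on ℝⁿ. Set u(x) = P·x + (v(x) + v*(x))/2. Then the eikonal equation with error term holds: (1/2)|Du|² − W − H̄ = (ħ/4)Δ(v − v*) − (1/8)|Dv − Dv*|² on ℝⁿ. -/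
/-!
Put `a = P + Dv` and `b = P + Dv*`. Then `Du = (a + b) / 2`, so the parallelogram identity
gives `|Du|² / 2 = (|a|² + |b|²) / 4 - |a - b|² / 8`, where `a - b = Dv - Dv*`. Averaging the two
hypotheses evaluates `(|a|² + |b|²) / 4 - W - H̄` as `(ħ / 4) (Δv - Δv*)`, and the Laplacian is
linear on `C²` functions (`lap_sub`).
-/

open MeasureTheory

noncomputable section

theorem dot_eq_inner {n : ℕ} (x y : En n) : dot x y = inner ℝ x y := by
  simp [dot, PiLp.inner_apply, mul_comm]

theorem differentiable_pd {n : ℕ} {f : En n → ℝ} (hf : ContDiff ℝ 2 f) (i : Fin n) :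
    Differentiable ℝ (fun y => pd i f y) := by
  have h : ContDiff ℝ 1 (fderiv ℝ f) := hf.fderiv_right (by norm_num)
  exact (h.clm_apply contDiff_const).differentiable (by norm_num)

theorem lap_sub {n : ℕ} {f g : En n → ℝ} (hf : ContDiff ℝ 2 f) (hg : ContDiff ℝ 2 g)
    (x : En n) : lap (fun y => f y - g y) x = lap f x - lap g x := by
  unfold lap
  rw [← Finset.sum_sub_distrib]
  refine Finset.sum_congr rfl fun i _ => ?_
  have h : (fun y => pd i (fun z => f z - g z) y) = fun y => pd i f y - pd i g y := by
    funext y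
    unfold pd
    rw [fderiv_fun_sub (hf.differentiable (by norm_num) y) (hg.differentiable (by norm_num) y)]
    rfl
  rw [h]
  exact congrArg (fun L => L (EuclideanSpace.single i 1))
    (fderiv_fun_sub (differentiable_pd hf i x) (differentiable_pd hg i x))

theorem gradient_dot_add_average {n : ℕ} (P : En n) {f g : En n → ℝ} {x : En n}
    (hf : DifferentiableAt ℝ f x) (hg : DifferentiableAt ℝ g x) :
    gradient (fun y => dot P y + (f y + g y) / 2) x
      = P + (1 / 2 : ℝ) • (gradient f x + gradient g x) := by
  apply HasGradientAt.gradient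
  rw [hasGradientAt_iff_hasFDerivAt]
  have h1 : HasFDerivAt (fun y => dot P y) (InnerProductSpace.toDual ℝ (En n) P) x := by
    have h : (fun y => dot P y) = InnerProductSpace.toDual ℝ (En n) P := by
      funext y
      rw [dot_eq_inner, InnerProductSpace.toDual_apply_apply]
    rw [h]
    exact ContinuousLinearMap.hasFDerivAt _
  have h2 := h1.add ((hf.hasGradientAt.hasFDerivAt.add hg.hasGradientAt.hasFDerivAt).const_mul
    (1 / 2 : ℝ))
  have hfun : (fun y => dot P y + (f y + g y) / 2)
      = (fun y => dot P y) + fun y => 1 / 2 * (f + g) y := by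
    funext y
    simp only [Pi.add_apply]
    ring
  rw [hfun]
  simpa only [map_add, map_smulₛₗ, RCLike.conj_to_real] using h2

/-- Theorem 5.1(ii): the eikonal equation with error term. -/
theorem eikonal_equation {n : ℕ} (hbar : ℝ) (h_hbar : 0 < hbar) (P : En n)
    (W : En n → ℝ) (hW : ContDiff ℝ (⊤ : ℕ∞) W) (Hbar : ℝ)
    (v vstar : En n → ℝ) (hv : ContDiff ℝ (⊤ : ℕ∞) v) (hvstar : ContDiff ℝ (⊤ : ℕ∞) vstar)
    (heqv : ∀ x, -(hbar / 2) * lap v x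
        + 1 / 2 * dot (P + gradient v x) (P + gradient v x) - W x = Hbar)
    (heqvstar : ∀ x, hbar / 2 * lap vstar x
        + 1 / 2 * dot (P + gradient vstar x) (P + gradient vstar x) - W x = Hbar)
    (u : En n → ℝ) (hu : u = fun x => dot P x + (v x + vstar x) / 2) :
    ∀ x, 1 / 2 * dot (gradient u x) (gradient u x) - W x - Hbar
      = hbar / 4 * lap (fun y => v y - vstar y) x
          - 1 / 8 * dot (gradient v x - gradient vstar x)
                        (gradient v x - gradient vstar x) := by
  intro x
  have hv2 : ContDiff ℝ 2 v := hv.of_le (by norm_cast)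
  have hvs2 : ContDiff ℝ 2 vstar := hvstar.of_le (by norm_cast)
  have e1 := heqv x
  have e2 := heqvstar x
  rw [hu, gradient_dot_add_average P (hv2.differentiable (by norm_num) x)
    (hvs2.differentiable (by norm_num) x), lap_sub hv2 hvs2]
  simp only [dot_eq_inner, real_inner_self_eq_norm_sq] at e1 e2 ⊢
  have hpar := parallelogram_law_with_norm ℝ (P + gradient v x) (P + gradient vstar x)
  have hsum : P + gradient v x + (P + gradient vstar x)
      = (2 : ℝ) • (P + (1 / 2 : ℝ) • (gradient v x + gradient vstar x)) := by
    module
  rw [hsum, add_sub_add_left_eq_sub, norm_smul, Real.norm_ofNat] at hpar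
  linarith
end
end
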